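/- Let κ be a (P,ρ)-kernel on a locally finite weakly ranked poset (P,ρ), with right KLS function f, left KLS function g, and Chow function ℋ. If either f is non-negative (every coefficient of every f_{st}(x) is ≥ 0) or g is non-negative, then for every s ≤ t in P the polynomial ℋ_{st}(x) has non-negative coefficients and its coefficient sequence is unimodal. -/

import Mathlib

/-!
Since `(x-1) κ̄ = κ - xδ`, the relation `f^rev = κ f` gives `(x-1) κ̄ f = f^rev - x f`, and
multiplying by `ℋ = -κ̄⁻¹` on the left yields `ℋ (f^rev - x f) = -(x-1) f`. Solving for `ℋ_{st}`,
`s < t`, one gets the recursion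

`ℋ_{st} = (f^rev_{st} - f_{st})/(x-1) + ∑_{s<w<t} ℋ_{sw} (f^rev_{wt} - x f_{wt})/(x-1)`.

If `f_{wt} = ∑ c_i x^i` with `c_i ≥ 0` and `r = ρ_{wt} > 2 deg f_{wt}`, the quotients are
`∑ c_i (x^i + ⋯ + x^(r-1-i))` and `∑ c_i (x^(i+1) + ⋯ + x^(r-1-i))`: non-negative combinations of
strings of consecutive powers with common centre `(r-1)/2`, respectively `r/2`. The product of two
such strings is again a sum of strings with common centre (`stringCone_mul`, by the Clebsch–Gordan
rule `geom_mul_geom`), so by induction on `ρ_{st}` every `ℋ_{st}` with `s < t` is a sum of strings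
centred at `(ρ_{st}-1)/2` (`chow_mem_stringCone`), hence non-negative and unimodal. The statement
for `g` is the statement for `f` on the dual poset.

The division of `κ_{st}` by `x - 1` is exact because evaluating `f^rev = κ f` at `x = 1` shows
that `κ` becomes `δ` there (`kernel_eval_one`).
-/

open Finset Polynomial
open scoped Classical

noncomputable section

variable {α : Type*}

/-- Convolution product in the incidence algebra of a locally finite poset over `ℤ[x]`.
Only the values on intervals `s ≤ t` are relevant. -/
def conv [PartialOrder α] [LocallyFiniteOrder α] (a b : α → α → Polynomial ℤ) :
    α → α → Polynomial ℤ :=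
  fun s t => ∑ w ∈ Finset.Icc s t, a s w * b w t

/-- The identity `δ` of the incidence algebra. -/
def dlt [PartialOrder α] : α → α → Polynomial ℤ :=
  fun s t => if s = t then 1 else 0

/-- The involution `a ↦ a^rev`, given by `(a^rev)_{st}(x) = x^{ρ_{st}} a_{st}(1/x)`. -/
def rev (ρ : α → α → ℕ) (a : α → α → Polynomial ℤ) : α → α → Polynomial ℤ :=
  fun s t => (a s t).reflect (ρ s t)

/-- A weak rank function on a poset. -/
structure IsWeakRank [Preorder α] (ρ : α → α → ℕ) : Prop where
  pos : ∀ ⦃s t : α⦄, s < t → 0 < ρ s t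
  add : ∀ ⦃s w t : α⦄, s ≤ w → w ≤ t → ρ s t = ρ s w + ρ w t

/-- `κ` is a `(P,ρ)`-kernel: it lies in `I_ρ(P)`, is `1` on the diagonal, and `κ⁻¹ = κ^rev`. -/
structure IsKernel [PartialOrder α] [LocallyFiniteOrder α] (ρ : α → α → ℕ)
    (κ : α → α → Polynomial ℤ) : Prop where
  degLE : ∀ ⦃s t : α⦄, s ≤ t → (κ s t).natDegree ≤ ρ s t
  diag : ∀ s : α, κ s s = 1
  left : ∀ ⦃s t : α⦄, s ≤ t → conv (rev ρ κ) κ s t = dlt s t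
  right : ∀ ⦃s t : α⦄, s ≤ t → conv κ (rev ρ κ) s t = dlt s t

/-- The reduced kernel `κ̄`: `κ̄_{st} = κ_{st}/(x-1)` for `s < t` and `κ̄_{ss} = -1`. -/
def red [PartialOrder α] (κ : α → α → Polynomial ℤ) : α → α → Polynomial ℤ :=
  fun s t => if s = t then -1 else κ s t /ₘ (X - 1)

/-- `H` is the Chow function of `κ`, i.e. `H = -(κ̄)⁻¹`. -/
structure IsChow [PartialOrder α] [LocallyFiniteOrder α] (κ H : α → α → Polynomial ℤ) : Prop where
  left : ∀ ⦃s t : α⦄, s ≤ t → conv (red κ) H s t = -dlt s t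
  right : ∀ ⦃s t : α⦄, s ≤ t → conv H (red κ) s t = -dlt s t

/-- `f` is the right KLS function of the kernel `κ`. -/
structure IsRightKLS [PartialOrder α] [LocallyFiniteOrder α] (ρ : α → α → ℕ)
    (κ f : α → α → Polynomial ℤ) : Prop where
  diag : ∀ s : α, f s s = 1
  degLT : ∀ ⦃s t : α⦄, s < t → 2 * (f s t).natDegree < ρ s t
  rev_eq : ∀ ⦃s t : α⦄, s ≤ t → rev ρ f s t = conv κ f s t

/-- `g` is the left KLS function of the kernel `κ`. -/
structure IsLeftKLS [PartialOrder α] [LocallyFiniteOrder α] (ρ : α → α → ℕ)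
    (κ g : α → α → Polynomial ℤ) : Prop where
  diag : ∀ s : α, g s s = 1
  degLT : ∀ ⦃s t : α⦄, s < t → 2 * (g s t).natDegree < ρ s t
  rev_eq : ∀ ⦃s t : α⦄, s ≤ t → rev ρ g s t = conv g κ s t

/-- `p` is symmetric with center of symmetry `d/2`, i.e. `p(x) = x^d p(1/x)`. -/
def PolySymm (d : ℕ) (p : Polynomial ℤ) : Prop := p.natDegree ≤ d ∧ p.reflect d = p

/-- All coefficients of `p` are non-negative. -/
def PolyNonneg (p : Polynomial ℤ) : Prop := ∀ n, 0 ≤ p.coeff n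

/-- The coefficient sequence of `p` is unimodal. -/
def PolyUnimodal (p : Polynomial ℤ) : Prop :=
  ∃ j, (∀ i < j, p.coeff i ≤ p.coeff (i + 1)) ∧ ∀ i, j ≤ i → p.coeff (i + 1) ≤ p.coeff i

end

/-! ### Symmetric unimodal polynomials -/

/-- The cone of non-negative integer combinations of the strings
`x^m (1 + x + ⋯ + x^(k-1))` with `2m + k = D`. All these strings are centred at `(D-1)/2`, so the
elements are exactly the non-negative symmetric unimodal polynomials with that centre. -/
noncomputable def stringCone (D : ℕ) : AddSubmonoid (Polynomial ℤ) :=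
  AddSubmonoid.closure {p | ∃ m k : ℕ, 2 * m + k = D ∧ p = X ^ m * ∑ i ∈ Finset.range k, X ^ i}

theorem string_mem {D m k : ℕ} (h : 2 * m + k = D) :
    (X ^ m * ∑ i ∈ Finset.range k, X ^ i : Polynomial ℤ) ∈ stringCone D :=
  AddSubmonoid.subset_closure ⟨m, k, h, rfl⟩

theorem X_sub_one_ne_zero : (X - 1 : Polynomial ℤ) ≠ 0 := by
  simpa using X_sub_C_ne_zero (1 : ℤ)

/-- The Clebsch–Gordan step `[k+1][l+1] = [k+l+1] + x [k][l]` for `[k] = 1 + x + ⋯ + x^(k-1)`. -/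
theorem geom_mul_geom (k l : ℕ) :
    (∑ i ∈ Finset.range (k + 1), X ^ i : Polynomial ℤ) * ∑ i ∈ Finset.range (l + 1), X ^ i =
      ∑ i ∈ Finset.range (k + l + 1), X ^ i +
        X * ((∑ i ∈ Finset.range k, X ^ i) * ∑ i ∈ Finset.range l, X ^ i) := by
  apply mul_left_cancel₀ X_sub_one_ne_zero
  apply mul_left_cancel₀ X_sub_one_ne_zero
  have e : ∀ n, (X - 1 : Polynomial ℤ) * ∑ i ∈ Finset.range n, X ^ i = X ^ n - 1 :=
    fun n => mul_geom_sum X n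
  have h1 := e (k + 1)
  have h2 := e (l + 1)
  have h3 := e (k + l + 1)
  have h4 := e k
  have h5 := e l
  generalize (∑ i ∈ Finset.range (k + 1), X ^ i : Polynomial ℤ) = a1 at *
  generalize (∑ i ∈ Finset.range (l + 1), X ^ i : Polynomial ℤ) = a2 at *
  generalize (∑ i ∈ Finset.range (k + l + 1), X ^ i : Polynomial ℤ) = a3 at *
  generalize (∑ i ∈ Finset.range k, X ^ i : Polynomial ℤ) = a4 at *
  generalize (∑ i ∈ Finset.range l, X ^ i : Polynomial ℤ) = a5 at *
  calc (X - 1) * ((X - 1) * (a1 * a2)) = ((X - 1) * a1) * ((X - 1) * a2) := by ring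
    _ = (X - 1) * ((X - 1) * a3) + X * (((X - 1) * a4) * ((X - 1) * a5)) := by
      rw [h1, h2, h3, h4, h5]; ring
    _ = _ := by ring

theorem string_mul_string_mem (k : ℕ) : ∀ (l M D : ℕ), 2 * M + k + l = D + 1 →
    (X ^ M * ((∑ i ∈ Finset.range k, X ^ i) * ∑ i ∈ Finset.range l, X ^ i) : Polynomial ℤ)
      ∈ stringCone D := by
  induction k with
  | zero => intro l M D _; simp [zero_mem]
  | succ k ih =>
    intro l M D h
    cases l with
    | zero => simp [zero_mem]
    | succ l =>
      rw [geom_mul_geom, mul_add, ← mul_assoc, ← pow_succ]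
      exact add_mem (string_mem (by omega)) (ih l (M + 1) D (by omega))

/-- Products of symmetric unimodal polynomials are symmetric unimodal; the centres
`(D-1)/2` and `E/2` add up to `(D+E-1)/2`. -/
theorem stringCone_mul {D E : ℕ} {p q : Polynomial ℤ} (hp : p ∈ stringCone D)
    (hq : q ∈ stringCone (E + 1)) : p * q ∈ stringCone (D + E) := by
  induction hp using AddSubmonoid.closure_induction with
  | zero => simp [zero_mem]
  | add a b _ _ ha hb => rw [add_mul]; exact add_mem ha hb
  | mem a ha =>
    obtain ⟨m, k, hmk, rfl⟩ := ha
    induction hq using AddSubmonoid.closure_induction with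
    | zero => simp [zero_mem]
    | add a b _ _ ha hb => rw [mul_add]; exact add_mem ha hb
    | mem b hb =>
      obtain ⟨n, l, hnl, rfl⟩ := hb
      rw [mul_mul_mul_comm, ← pow_add]
      exact string_mul_string_mem k l (m + n) (D + E) (by omega)

theorem C_mul_mem {D : ℕ} {c : ℤ} (hc : 0 ≤ c) {p : Polynomial ℤ} (hp : p ∈ stringCone D) :
    C c * p ∈ stringCone D := by
  obtain ⟨n, rfl⟩ := Int.eq_ofNat_of_zero_le hc
  have : C ((n : ℕ) : ℤ) * p = n • p := by simp
  rw [this]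
  exact AddSubmonoid.nsmul_mem _ hp n

theorem coeff_string (m k n : ℕ) :
    (X ^ m * ∑ i ∈ Finset.range k, X ^ i : Polynomial ℤ).coeff n =
      if m ≤ n ∧ n < m + k then 1 else 0 := by
  rw [coeff_X_pow_mul']
  by_cases h : m ≤ n
  · have : n - m < k ↔ n < m + k := by omega
    simp [h, coeff_X_pow, this]
  · simp [h]

/-- All elements of the cone share the mode `⌊(D-1)/2⌋`. -/
theorem stringCone_spec {D : ℕ} {p : Polynomial ℤ} (hp : p ∈ stringCone D) :
    PolyNonneg p ∧ PolyUnimodal p := by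
  suffices h : (∀ n, 0 ≤ p.coeff n) ∧ (∀ i < (D - 1) / 2, p.coeff i ≤ p.coeff (i + 1)) ∧
      ∀ i, (D - 1) / 2 ≤ i → p.coeff (i + 1) ≤ p.coeff i from ⟨h.1, _, h.2⟩
  induction hp using AddSubmonoid.closure_induction with
  | zero => simp
  | add a b _ _ ha hb =>
    simp only [coeff_add]
    exact ⟨fun n => add_nonneg (ha.1 n) (hb.1 n),
      fun i hi => add_le_add (ha.2.1 i hi) (hb.2.1 i hi),
      fun i hi => add_le_add (ha.2.2 i hi) (hb.2.2 i hi)⟩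
  | mem a ha =>
    obtain ⟨m, k, hmk, rfl⟩ := ha
    simp only [coeff_string]
    refine ⟨fun n => by split_ifs <;> simp, fun i hi => ?_, fun i hi => ?_⟩ <;>
      split_ifs <;> omega

/-! ### The quotients `(p^rev - p)/(x-1)` and `(p^rev - xp)/(x-1)` -/

theorem reflect_sum_range (r N : ℕ) (c : ℕ → ℤ) :
    (∑ i ∈ Finset.range N, C (c i) * X ^ i : Polynomial ℤ).reflect r =
      ∑ i ∈ Finset.range N, C (c i) * X ^ revAt r i := by
  induction N with
  | zero => simp
  | succ n ih => rw [Finset.sum_range_succ, reflect_add, ih, reflect_C_mul_X_pow,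
      Finset.sum_range_succ]

theorem exists_quot (r e : ℕ) (he : e ≤ 1) (p : Polynomial ℤ) (hp : PolyNonneg p)
    (hd : 2 * p.natDegree < r) :
    ∃ a ∈ stringCone (r + e), (X - 1) * a = p.reflect r - X ^ e * p := by
  refine ⟨∑ i ∈ Finset.range (p.natDegree + 1), C (p.coeff i) *
    (X ^ (i + e) * ∑ j ∈ Finset.range (r - 2 * i - e), X ^ j), ?_, ?_⟩
  · refine sum_mem fun i hi => C_mul_mem (hp i) (string_mem ?_)
    rw [Finset.mem_range] at hi
    omega
  · conv_rhs => rw [p.as_sum_range_C_mul_X_pow, reflect_sum_range]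
    rw [Finset.mul_sum, Finset.mul_sum, ← Finset.sum_sub_distrib]
    refine Finset.sum_congr rfl fun i hi => ?_
    rw [Finset.mem_range] at hi
    rw [revAt_le (by omega), show r - i = (i + e) + (r - 2 * i - e) by omega]
    have h := mul_geom_sum (X : Polynomial ℤ) (r - 2 * i - e)
    calc (X - 1) * (C (p.coeff i) * (X ^ (i + e) * ∑ j ∈ Finset.range (r - 2 * i - e), X ^ j))
        = C (p.coeff i) * (X ^ (i + e) *
            ((X - 1) * ∑ j ∈ Finset.range (r - 2 * i - e), X ^ j)) := by ring
      _ = _ := by rw [h]; ring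

theorem eval_one_reflect (r : ℕ) (p : Polynomial ℤ) (h : p.natDegree ≤ r) :
    (p.reflect r).eval 1 = p.eval 1 := by
  let _ : Invertible (1 : ℤ) := invertibleOne
  have := eval₂_reflect_mul_pow (RingHom.id ℤ) 1 r p h
  simpa [eval₂_id] using this

/-! ### The recursion for the Chow function -/

theorem conv_assoc {β : Type*} [PartialOrder β] [LocallyFiniteOrder β]
    (a b c : β → β → Polynomial ℤ) (s t : β) :
    conv a (conv b c) s t = conv (conv a b) c s t := by
  simp only [conv, Finset.mul_sum, Finset.sum_mul]
  rw [Finset.sum_comm' (t' := Finset.Icc s t) (s' := fun v => Finset.Icc s v)]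
  · simp only [mul_assoc]
  · intro w v
    simp only [Finset.mem_Icc]
    constructor
    · rintro ⟨⟨h1, h2⟩, h3, h4⟩
      exact ⟨⟨h1, h3⟩, h1.trans h3, h4⟩
    · rintro ⟨⟨h1, h2⟩, h3, h4⟩
      exact ⟨⟨h1, h2.trans h4⟩, h2, h4⟩

theorem sum_Icc_split {β M : Type*} [PartialOrder β] [LocallyFiniteOrder β] [AddCommMonoid M]
    (F : β → M) {s t : β} (h : s < t) :
    ∑ w ∈ Finset.Icc s t, F w = F s + (∑ w ∈ Finset.Ioo s t, F w + F t) := by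
  rw [← Finset.Ioc_insert_left h.le, Finset.sum_insert (by simp), ← Finset.Ioo_insert_right h,
    Finset.sum_insert (by simp), add_comm (F t)]

/-- Evaluating `f^rev = κ f` at `x = 1` gives `f = κ f` there, so `κ` specialises to `δ`. -/
theorem kernel_eval_one {β : Type*} [PartialOrder β] [LocallyFiniteOrder β]
    {ρ : β → β → ℕ} (hρ : IsWeakRank ρ) {κ f : β → β → Polynomial ℤ} (hκ : ∀ s, κ s s = 1)
    (hf : IsRightKLS ρ κ f) : ∀ (n : ℕ) (s t : β), ρ s t = n → s < t → (κ s t).eval 1 = 0 := by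
  intro n
  induction n using Nat.strong_induction_on with
  | _ n ih =>
    intro s t hn hst
    have h1 := congrArg (Polynomial.eval 1) (hf.rev_eq hst.le)
    rw [rev, eval_one_reflect _ _ (by have := hf.degLT hst; omega), conv, sum_Icc_split _ hst,
      eval_add, eval_add, eval_finsetSum, Finset.sum_eq_zero, hκ, hf.diag] at h1
    · simpa using h1
    · intro w hw
      rw [Finset.mem_Ioo] at hw
      have e := hρ.add hw.1.le hw.2.le
      have := hρ.pos hw.2
      rw [eval_mul, ih (ρ s w) (by omega) s w rfl hw.1, zero_mul]

/-- The defining property of the reduced kernel: `κ = (x-1) κ̄ + x δ`. -/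
theorem kernel_eq {β : Type*} [PartialOrder β] [LocallyFiniteOrder β]
    {ρ : β → β → ℕ} (hρ : IsWeakRank ρ) {κ f : β → β → Polynomial ℤ} (hκ : ∀ s, κ s s = 1)
    (hf : IsRightKLS ρ κ f) {s t : β} (hst : s ≤ t) :
    κ s t = (X - 1) * red κ s t + X * dlt s t := by
  rcases hst.eq_or_lt with rfl | h
  · simp [red, dlt, hκ]
  · have h0 : (X - C 1) * (κ s t /ₘ (X - C 1)) = κ s t :=
      mul_divByMonic_eq_iff_isRoot.2 (kernel_eval_one hρ hκ hf _ s t rfl h)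
    simp only [red, dlt, h.ne, if_false, mul_zero, add_zero]
    simpa using h0.symm

theorem dlt_conv {β : Type*} [PartialOrder β] [LocallyFiniteOrder β]
    (a : β → β → Polynomial ℤ) {s t : β} (h : s ≤ t) : conv dlt a s t = a s t := by
  simp [conv, dlt, ite_mul, h]

/-- The identity `ℋ (f^rev - x f) = -(x-1) f`. -/
theorem chow_conv {β : Type*} [PartialOrder β] [LocallyFiniteOrder β]
    {ρ : β → β → ℕ} (hρ : IsWeakRank ρ) {κ f H : β → β → Polynomial ℤ} (hκ : ∀ s, κ s s = 1)
    (hH : ∀ ⦃s t⦄, s ≤ t → conv H (red κ) s t = -dlt s t)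
    (hf : IsRightKLS ρ κ f) {s t : β} (hst : s ≤ t) :
    ∑ w ∈ Finset.Icc s t, H s w * ((f w t).reflect (ρ w t) - X * f w t) =
      -((X - 1) * f s t) := by
  have key : ∀ w ∈ Finset.Icc s t, H s w * ((f w t).reflect (ρ w t) - X * f w t) =
      (X - 1) * (H s w * conv (red κ) f w t) := by
    intro w hw
    rw [Finset.mem_Icc] at hw
    have h1 := hf.rev_eq hw.2
    have h2 : conv κ f w t = (X - 1) * conv (red κ) f w t + X * conv dlt f w t := by
      simp only [conv, Finset.mul_sum]
      rw [← Finset.sum_add_distrib]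
      refine Finset.sum_congr rfl fun v hv => ?_
      rw [kernel_eq hρ hκ hf (Finset.mem_Icc.1 hv).1]
      ring
    rw [dlt_conv f hw.2, ← h1, rev] at h2
    rw [h2]
    ring
  rw [Finset.sum_congr rfl key, ← Finset.mul_sum]
  have h3 : ∑ w ∈ Finset.Icc s t, H s w * conv (red κ) f w t = -f s t := by
    change conv H (conv (red κ) f) s t = _
    rw [conv_assoc, ← dlt_conv f hst]
    simp only [conv, ← Finset.sum_neg_distrib]
    refine Finset.sum_congr rfl fun v hv => ?_
    have := hH (Finset.mem_Icc.1 hv).1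
    rw [conv] at this
    rw [this]
    ring
  rw [h3]
  ring

theorem chow_diag {β : Type*} [PartialOrder β] [LocallyFiniteOrder β]
    {κ H : β → β → Polynomial ℤ} (hH : ∀ ⦃s t⦄, s ≤ t → conv H (red κ) s t = -dlt s t) (s : β) :
    H s s = 1 := by
  simpa [conv, red, dlt] using hH (le_refl s)

/-- The case of a non-negative right KLS function, using only that `ℋ` is a left inverse of
`-κ̄`: for `s < t`, `ℋ_{st}` is symmetric unimodal with centre `(ρ_{st}-1)/2`. -/
theorem chow_mem_stringCone {β : Type*} [PartialOrder β] [LocallyFiniteOrder β]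
    {ρ : β → β → ℕ} (hρ : IsWeakRank ρ) {κ f H : β → β → Polynomial ℤ} (hκ : ∀ s, κ s s = 1)
    (hH : ∀ ⦃s t⦄, s ≤ t → conv H (red κ) s t = -dlt s t)
    (hf : IsRightKLS ρ κ f) (hpos : ∀ s t, s ≤ t → PolyNonneg (f s t)) :
    ∀ (n : ℕ) (s t : β), ρ s t = n → s < t → H s t ∈ stringCone (ρ s t) := by
  have hq : ∀ w t : β, w < t → ∃ b ∈ stringCone (ρ w t + 1),
      (X - 1) * b = (f w t).reflect (ρ w t) - X * f w t := fun w t h => by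
    simpa using exists_quot (ρ w t) 1 le_rfl (f w t) (hpos w t h.le) (hf.degLT h)
  choose! G hGmem hG using hq
  intro n
  induction n using Nat.strong_induction_on with
  | _ n ih =>
    intro s t hn hst
    obtain ⟨a, ha, ha'⟩ := exists_quot (ρ s t) 0 zero_le_one (f s t) (hpos s t hst.le)
      (hf.degLT hst)
    have hρt : ρ t t = 0 := by
      have := hρ.add (le_refl t) (le_refl t)
      omega
    have hrec : H s t = a + ∑ w ∈ Finset.Ioo s t, H s w * G w t := by
      have h := chow_conv hρ hκ hH hf hst.le
      rw [sum_Icc_split _ hst, chow_diag hH, hf.diag, hρt] at h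
      have h' : ∑ w ∈ Finset.Ioo s t, H s w * ((f w t).reflect (ρ w t) - X * f w t) =
          (X - 1) * ∑ w ∈ Finset.Ioo s t, H s w * G w t := by
        rw [Finset.mul_sum]
        refine Finset.sum_congr rfl fun w hw => ?_
        rw [← hG w t (Finset.mem_Ioo.1 hw).2]
        ring
      have h1 : (1 : Polynomial ℤ).reflect 0 = 1 := by simp
      rw [h', h1] at h
      apply mul_left_cancel₀ X_sub_one_ne_zero
      rw [mul_add, ha']
      linear_combination -h
    rw [hrec]
    refine add_mem ha (sum_mem fun w hw => ?_)
    rw [Finset.mem_Ioo] at hw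
    have e := hρ.add hw.1.le hw.2.le
    have := hρ.pos hw.2
    rw [e]
    exact stringCone_mul (ih (ρ s w) (by omega) s w rfl hw.1) (hGmem w t hw.2)

/-! ### Order duality -/

open OrderDual in
theorem conv_dual {β : Type*} [PartialOrder β] [LocallyFiniteOrder β]
    (a b : β → β → Polynomial ℤ) (s t : βᵒᵈ) :
    conv (fun x y : βᵒᵈ => a (ofDual y) (ofDual x)) (fun x y => b (ofDual y) (ofDual x)) s t =
      conv b a (ofDual t) (ofDual s) := by
  simp only [conv, Finset.Icc_orderDual_def, Finset.sum_map]
  exact Finset.sum_congr rfl fun w _ => mul_comm _ _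

theorem dlt_dual {β : Type*} [PartialOrder β] (s t : βᵒᵈ) :
    dlt s t = dlt (OrderDual.ofDual t) (OrderDual.ofDual s) := by
  simp [dlt, eq_comm]

theorem red_dual {β : Type*} [PartialOrder β] (κ : β → β → Polynomial ℤ) :
    red (fun x y : βᵒᵈ => κ (OrderDual.ofDual y) (OrderDual.ofDual x)) =
      fun x y => red κ (OrderDual.ofDual y) (OrderDual.ofDual x) := by
  funext s t
  simp [red, eq_comm]

/-- Theorem 3.12: if either the right KLS function `f` or the left KLS function `g` of a kernel
`κ` is non-negative, then the Chow function `ℋ` is non-negative and unimodal. -/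
theorem chow_nonneg_unimodal_of_kls_nonneg [PartialOrder α] [LocallyFiniteOrder α]
    (ρ : α → α → ℕ) (hρ : IsWeakRank ρ)
    (κ : α → α → Polynomial ℤ) (hκ : IsKernel ρ κ)
    (H : α → α → Polynomial ℤ) (hH : IsChow κ H)
    (f : α → α → Polynomial ℤ) (hf : IsRightKLS ρ κ f)
    (g : α → α → Polynomial ℤ) (hg : IsLeftKLS ρ κ g)
    (hpos : (∀ s t : α, s ≤ t → PolyNonneg (f s t)) ∨ (∀ s t : α, s ≤ t → PolyNonneg (g s t))) :
    ∀ s t : α, s ≤ t → PolyNonneg (H s t) ∧ PolyUnimodal (H s t) := by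
  have hdiag := chow_diag hH.right
  suffices h : ∀ s t : α, s < t → H s t ∈ stringCone (ρ s t) by
    intro s t hst
    rcases hst.eq_or_lt with rfl | hlt
    · rw [hdiag]
      exact stringCone_spec (D := 1) (by simpa using string_mem (D := 1) (m := 0) (k := 1) rfl)
    · exact stringCone_spec (h s t hlt)
  rcases hpos with hpos | hpos
  · exact fun s t hst => chow_mem_stringCone hρ hκ.diag hH.right hf hpos _ s t rfl hst
  · intro s t hst
    -- `g` is the right KLS function, and `ℋ` the Chow function, of the kernel `κ` on the dual poset.
    refine chow_mem_stringCone (β := αᵒᵈ)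
      (ρ := fun x y => ρ (OrderDual.ofDual y) (OrderDual.ofDual x))
      (κ := fun x y => κ (OrderDual.ofDual y) (OrderDual.ofDual x))
      (f := fun x y => g (OrderDual.ofDual y) (OrderDual.ofDual x))
      (H := fun x y => H (OrderDual.ofDual y) (OrderDual.ofDual x))
      ⟨?_, ?_⟩ ?_ ?_ ⟨?_, ?_, ?_⟩ ?_ _ (OrderDual.toDual t) (OrderDual.toDual s) rfl hst
    · exact fun x y h => hρ.pos h
    · intro x w y h1 h2
      rw [add_comm]
      exact hρ.add h2 h1
    · exact fun x => hκ.diag _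
    · intro x y h
      rw [red_dual, conv_dual, dlt_dual]
      exact hH.left h
    · exact fun x => hg.diag _
    · exact fun x y h => hg.degLT h
    · intro x y h
      rw [conv_dual]
      exact hg.rev_eq h
    · exact fun x y h => hpos _ _ h
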